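/- arXiv:2310.14600 — 8 statements merged into one kernel-verified Lean document; each statement's English description precedes it below -/
import Mathlib

section
/- Public certifiability is not closed under union of sets of agents: there exist a type W of worlds, a type of agents, accessibility relations R each of which is an equivalence relation on W, a proposition φ : W → Prop, a world w, and sets A and B of agents such that PC A φ w and PC B φ w both hold but PC (A ∪ B) φ w fails. -/
/-- Agent `x` knows `φ` at world `w`. -/
def K {W Agent : Type*} (R : Agent → W → W → Prop) (x : Agent) (φ : W → Prop) (w : W) : Prop :=
  ∀ v, R x w v → φ v

/-- `φ` is publicly certified amongst the set `A` of agents at world `w`. -/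
def PC {W Agent : Type*} (R : Agent → W → W → Prop) (A : Set Agent) (φ : W → Prop) (w : W) : Prop :=
  ∀ x ∈ A, ∀ y ∈ A, K R x (K R y φ) w

theorem pc_not_closed_under_union :
    ∃ (W Agent : Type) (R : Agent → W → W → Prop),
      (∀ x : Agent, Equivalence (R x)) ∧
      ∃ (φ : W → Prop) (w : W) (A B : Set Agent),
        PC R A φ w ∧ PC R B φ w ∧ ¬ PC R (A ∪ B) φ w := by
  let f : Bool → Fin 3 → Fin 2 := fun b => if b then ![0, 0, 1] else ![0, 1, 1]
  refine ⟨Fin 3, Bool, fun x a b => f x a = f x b,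
    fun x => ⟨fun _ => rfl, fun h => h.symm, fun h h' => h.trans h'⟩,
    fun v => v ≠ 2, 0, {true}, {false}, ?_, ?_, ?_⟩
  · rintro x rfl y rfl
    unfold K
    decide
  · rintro x rfl y rfl
    unfold K
    decide
  · intro h
    exact h true (Or.inl rfl) false (Or.inr rfl) 1 rfl 2 rfl rfl
end

section
/- At any time each asset has at most one owner: for any ledger bc, any asset α, and any agents a and a', if Owns bc a α and Owns bc a' α then a = a'. -/
/-- An entry of the blockchain ledger. -/
inductive Entry (Agent Asset : Type*) where
  | mint (a : Agent) (α : Asset)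
  | transfer (old new : Agent) (α : Asset)
  | pay (b s : Agent) (c : ℝ)

variable {Agent Asset : Type*}

/-- If `e` is a token entry for asset `α`, the agent it assigns ownership of `α` to;
otherwise `none`. -/
def tokenOwner [DecidableEq Asset] (e : Entry Agent Asset) (α : Asset) : Option Agent :=
  match e with
  | .mint a β => if β = α then some a else none
  | .transfer _ new β => if β = α then some new else none
  | .pay _ _ _ => none

/-- `Owns bc a α`: some position of `bc` holds a token entry for `α` assigning
ownership to `a`, and no later position holds a token entry for `α`. -/
def Owns [DecidableEq Asset] (bc : List (Entry Agent Asset)) (a : Agent) (α : Asset) : Prop :=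
  ∃ i : Fin bc.length, tokenOwner (bc.get i) α = some a ∧
    ∀ j : Fin bc.length, (i : ℕ) < (j : ℕ) → tokenOwner (bc.get j) α = none

/-- The current owner of `α`, computed by a left fold over the ledger. -/
def currentOwner [DecidableEq Asset] (bc : List (Entry Agent Asset)) (α : Asset) : Option Agent :=
  bc.foldl (fun acc e => match tokenOwner e α with | some a => some a | none => acc) none

/-- A ledger is valid iff each mint concerns an asset currently unowned and each
transfer is from the current owner; payments have no precondition. -/
def Valid [DecidableEq Asset] (bc : List (Entry Agent Asset)) : Prop :=
  ∀ i : Fin bc.length,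
    match bc.get i with
    | .mint _ α => currentOwner (bc.take i) α = none
    | .transfer old _ α => currentOwner (bc.take i) α = some old
    | .pay _ _ _ => True

/-- The list, in ledger order, of agents assigned ownership of `α` by the token
entries for `α` in `bc`. -/
def ownerHistory [DecidableEq Asset] (bc : List (Entry Agent Asset)) (α : Asset) : List Agent :=
  bc.filterMap (fun e => tokenOwner e α)

/-- `isToken e` holds iff `e` is a mint or a transfer. -/
def isToken : Entry Agent Asset → Bool
  | .mint _ _ => true
  | .transfer _ _ _ => true
  | .pay _ _ _ => false

theorem owns_unique [DecidableEq Asset] (bc : List (Entry Agent Asset))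
    (α : Asset) (a a' : Agent) (h : Owns bc a α) (h' : Owns bc a' α) :
    a = a' := by
  obtain ⟨i, hi, hi'⟩ := h
  obtain ⟨j, hj, hj'⟩ := h'
  rcases lt_trichotomy (i : ℕ) (j : ℕ) with hlt | heq | hgt
  · have h0 := hi' j hlt
    rw [hj] at h0
    exact absurd h0 (by simp)
  · have hij : i = j := Fin.ext heq
    subst hij
    rw [hi] at hj
    exact Option.some.inj hj
  · have h0 := hj' i hgt
    rw [hi] at h0
    exact absurd h0 (by simp)
end

section
/- The owner computed by scanning the ledger agrees with the ownership relation: for any ledger bc, asset α and agent a, currentOwner bc α = some a if and only if Owns bc a α. -/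
variable {Agent Asset : Type*}

theorem owns_iff_aux [DecidableEq Asset] (bc : List (Entry Agent Asset)) (a : Agent) (α : Asset) :
    Owns bc a α ↔ ∃ (i : ℕ) (h : i < bc.length), tokenOwner bc[i] α = some a ∧
      ∀ (j : ℕ) (hj : j < bc.length), i < j → tokenOwner bc[j] α = none := by
  constructor
  · rintro ⟨i, h1, h2⟩
    exact ⟨i, i.2, h1, fun j hj hij => h2 ⟨j, hj⟩ hij⟩
  · rintro ⟨i, hi, h1, h2⟩
    exact ⟨⟨i, hi⟩, h1, fun j hij => h2 j j.2 hij⟩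

theorem currentOwner_eq_iff_owns [DecidableEq Asset]
    (bc : List (Entry Agent Asset)) (α : Asset) (a : Agent) :
    currentOwner bc α = some a ↔ Owns bc a α := by
  rw [owns_iff_aux]
  induction bc using List.reverseRecOn with
  | nil => simp [currentOwner]
  | append_singleton l e ih =>
    have hc : currentOwner (l ++ [e]) α =
        match tokenOwner e α with | some a => some a | none => currentOwner l α := by
      simp only [currentOwner, List.foldl_append, List.foldl_cons, List.foldl_nil]
    have hlast : (l ++ [e])[l.length]'(by simp) = e := by simp
    have hlt : ∀ (j : ℕ) (hj : j < l.length),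
        (l ++ [e])[j]'(by simp; omega) = l[j] := fun j hj => List.getElem_append_left hj
    rw [hc]
    rcases h : tokenOwner e α with _ | b
    · simp only
      rw [ih]
      constructor
      · rintro ⟨i, hi, h1, h2⟩
        refine ⟨i, by simp; omega, by rw [hlt i hi]; exact h1, fun j hj hij => ?_⟩
        by_cases hjl : j < l.length
        · rw [hlt j hjl]; exact h2 j hjl hij
        · obtain rfl : j = l.length := by simp at hj; omega
          rw [hlast]; exact h
      · rintro ⟨i, hi, h1, h2⟩
        by_cases hil : i < l.length
        · refine ⟨i, hil, by rw [← hlt i hil]; exact h1, fun j hj hij => ?_⟩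
          rw [← hlt j hj]; exact h2 j _ hij
        · obtain rfl : i = l.length := by simp at hi; omega
          rw [hlast, h] at h1; cases h1
    · simp only
      constructor
      · intro hb
        refine ⟨l.length, by simp, by rw [hlast, h, hb], fun j hj hij => ?_⟩
        simp at hj; omega
      · rintro ⟨i, hi, h1, h2⟩
        by_cases hil : i < l.length
        · have := h2 l.length (by simp) hil
          rw [hlast, h] at this; cases this
        · obtain rfl : i = l.length := by simp at hi; omega
          rw [hlast, h] at h1; exact h1
end

section
/- In a valid ledger each asset is minted at most once: if bc is valid and the entries at positions i and j of bc are both mints of the same asset α, then i = j. -/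
variable {Agent Asset : Type*}

theorem fold_eq_none_aux [DecidableEq Asset] (α : Asset) (l : List (Entry Agent Asset)) :
    ∀ acc : Option Agent,
      l.foldl (fun acc e => match tokenOwner e α with | some a => some a | none => acc) acc = none →
      acc = none ∧ ∀ e ∈ l, tokenOwner e α = none := by
  induction l with
  | nil => intro acc h; exact ⟨h, by simp⟩
  | cons x l ih =>
    intro acc h
    rw [List.foldl_cons] at h
    obtain ⟨h1, h2⟩ := ih _ h
    cases hx : tokenOwner x α with
    | none =>
      rw [hx] at h1
      refine ⟨h1, ?_⟩
      intro e he
      rcases List.mem_cons.1 he with rfl | he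
      · exact hx
      · exact h2 e he
    | some b => rw [hx] at h1; cases h1

theorem not_lt_mint_aux [DecidableEq Asset] (bc : List (Entry Agent Asset))
    (h : Valid bc) (α : Asset) (a a' : Agent) (i j : Fin bc.length)
    (hi : bc.get i = Entry.mint a α) (hj : bc.get j = Entry.mint a' α) :
    ¬ (i : ℕ) < (j : ℕ) := by
  intro hij
  have hv := h j
  rw [hj] at hv
  have hm : bc.get i ∈ bc.take j := by
    rw [List.mem_take_iff_getElem]
    exact ⟨i, by have := j.2; have := i.2; omega, rfl⟩
  have := (fold_eq_none_aux α _ _ hv).2 _ hm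
  rw [hi] at this
  simp [tokenOwner] at this

theorem mint_unique [DecidableEq Asset] (bc : List (Entry Agent Asset))
    (h : Valid bc) (α : Asset) (a a' : Agent) (i j : Fin bc.length)
    (hi : bc.get i = Entry.mint a α) (hj : bc.get j = Entry.mint a' α) :
    i = j := by
  have h1 := not_lt_mint_aux bc h α a a' i j hi hj
  have h2 := not_lt_mint_aux bc h α a' a j i hj hi
  exact Fin.ext (by omega)
end

section
/- In a valid ledger the first token entry for any asset is a mint: if bc is valid, the entry at position i of bc is a token entry for asset α, and no entry at a position j < i is a token entry for α, then the entry at position i is a mint of α. -/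
variable {Agent Asset : Type*}

theorem currentOwner_none_aux [DecidableEq Asset] (l : List (Entry Agent Asset)) (α : Asset)
    (hl : ∀ e ∈ l, tokenOwner e α = none) : currentOwner l α = none := by
  unfold currentOwner
  induction l with
  | nil => rfl
  | cons e t ih =>
    rw [List.foldl_cons, hl e (by simp)]
    exact ih (fun x hx => hl x (by simp [hx]))

theorem first_token_is_mint [DecidableEq Asset] (bc : List (Entry Agent Asset))
    (h : Valid bc) (α : Asset) (i : Fin bc.length)
    (hi : (tokenOwner (bc.get i) α).isSome)
    (hfirst : ∀ j : Fin bc.length, (j : ℕ) < (i : ℕ) → tokenOwner (bc.get j) α = none) :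
    ∃ a : Agent, bc.get i = Entry.mint a α := by
  have hc : currentOwner (bc.take i) α = none := by
    apply currentOwner_none_aux
    intro e he
    obtain ⟨j, hj, rfl⟩ := List.mem_iff_getElem.1 he
    have hj' : j < (i : ℕ) ∧ j < bc.length := by
      rw [List.length_take] at hj
      omega
    have := hfirst ⟨j, hj'.2⟩ hj'.1
    simpa using this
  have hv := h i
  cases he : bc.get i with
  | mint a β =>
    rw [he] at hi
    by_cases hb : β = α
    · exact ⟨a, by rw [hb]⟩
    · simp [tokenOwner, hb] at hi
  | transfer o n β =>
    rw [he] at hi hv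
    by_cases hb : β = α
    · subst hb
      simp [hc] at hv
    · simp [tokenOwner, hb] at hi
  | pay b s c =>
    rw [he] at hi
    simp [tokenOwner] at hi
end

section
/- In a valid ledger the first recorded owner of an asset is its minter: if bc is valid and the entry mint a α occurs in bc, then the head of the owner history ownerHistory bc α is a (i.e. (ownerHistory bc α).head? = some a). -/
variable {Agent Asset : Type*}

theorem currentOwner_none_hist [DecidableEq Asset] (s : List (Entry Agent Asset)) (α : Asset)
    (h : currentOwner s α = none) : ownerHistory s α = [] := by
  induction s using List.reverseRecOn with
  | nil => rfl
  | append_singleton s e ih =>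
    simp only [currentOwner, List.foldl_append, List.foldl_cons, List.foldl_nil] at h
    cases he : tokenOwner e α with
    | some b => simp [he] at h
    | none =>
      rw [he] at h
      have := ih h
      simp only [ownerHistory] at this ⊢
      rw [List.filterMap_append, this]
      simp [he]

theorem ownerHistory_head_eq_minter [DecidableEq Asset]
    (bc : List (Entry Agent Asset)) (h : Valid bc) (a : Agent) (α : Asset)
    (hmem : Entry.mint a α ∈ bc) :
    (ownerHistory bc α).head? = some a := by
  obtain ⟨s, t, rfl⟩ := List.append_of_mem hmem
  have h1 := h ⟨s.length, by simp⟩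
  simp at h1
  have h2 := currentOwner_none_hist s α h1
  simp only [ownerHistory] at h2 ⊢
  rw [List.filterMap_append, h2]
  simp [tokenOwner]
end

section
/- Royalty and other payment entries do not affect ownership or validity: for any ledger bc, agent a and asset α, Owns bc a α holds if and only if Owns (bc.filter isToken) a α holds, where bc.filter isToken is bc with all pay entries removed; moreover bc is valid if and only if bc.filter isToken is valid. -/
variable {Agent Asset : Type*}

theorem owns_snoc [DecidableEq Asset] (l : List (Entry Agent Asset)) (e : Entry Agent Asset)
    (a : Agent) (α : Asset) :
    Owns (l ++ [e]) a α ↔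
      (tokenOwner e α = some a ∨ (tokenOwner e α = none ∧ Owns l a α)) := by
  constructor
  · rintro ⟨⟨i, hi⟩, h1, h2⟩
    have hi' : i < l.length + 1 := by simpa using hi
    by_cases h : i < l.length
    · right
      refine ⟨?_, ⟨i, h⟩, ?_, ?_⟩
      · simpa using h2 ⟨l.length, by simp⟩ h
      · simpa [List.getElem_append_left h] using h1
      · rintro ⟨j, hj⟩ hij
        have := h2 ⟨j, by simp; omega⟩ hij
        simpa [List.getElem_append_left hj] using this
    · left
      obtain rfl : i = l.length := by omega
      simpa using h1
  · rintro (h | ⟨h, ⟨i, hi⟩, h1, h2⟩)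
    · refine ⟨⟨l.length, by simp⟩, by simpa using h, ?_⟩
      rintro ⟨j, hj⟩ hij
      simp at hj hij
      omega
    · refine ⟨⟨i, by simp; omega⟩, by simpa [List.getElem_append_left hi] using h1, ?_⟩
      rintro ⟨j, hj⟩ hij
      have hj' : j < l.length + 1 := by simpa using hj
      by_cases hl : j < l.length
      · simpa [List.getElem_append_left hl] using h2 ⟨j, hl⟩ hij
      · obtain rfl : j = l.length := by omega
        simpa using h

/-- Precondition of an entry after a given prefix. -/
def EntryOk [DecidableEq Asset] (p : List (Entry Agent Asset)) (e : Entry Agent Asset) : Prop :=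
  match e with
  | .mint _ α => currentOwner p α = none
  | .transfer old _ α => currentOwner p α = some old
  | .pay _ _ _ => True

theorem valid_iff [DecidableEq Asset] (l : List (Entry Agent Asset)) :
    Valid l ↔ ∀ (i : ℕ) (h : i < l.length), EntryOk (l.take i) l[i] :=
  ⟨fun H i h => H ⟨i, h⟩, fun H i => H i.1 i.2⟩

theorem valid_snoc [DecidableEq Asset] (l : List (Entry Agent Asset)) (e : Entry Agent Asset) :
    Valid (l ++ [e]) ↔ (Valid l ∧ EntryOk l e) := by
  rw [valid_iff, valid_iff]
  constructor
  · intro H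
    constructor
    · intro i h
      have := H i (by simp; omega)
      rwa [List.getElem_append_left h, List.take_append_of_le_length h.le] at this
    · simpa using H l.length (by simp)
  · rintro ⟨H, he⟩ i hi
    have hi' : i < l.length + 1 := by simpa using hi
    by_cases h : i < l.length
    · rw [List.getElem_append_left h, List.take_append_of_le_length h.le]
      exact H i h
    · obtain rfl : i = l.length := by omega
      simpa using he

theorem currentOwner_filter [DecidableEq Asset] (l : List (Entry Agent Asset)) (α : Asset) :
    currentOwner (l.filter isToken) α = currentOwner l α := by
  induction l using List.reverseRecOn with
  | nil => rfl
  | append_singleton l e ih =>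
    unfold currentOwner at ih ⊢
    rw [List.filter_append, List.foldl_append, List.foldl_append, ih]
    cases e <;> rfl

theorem entryOk_filter [DecidableEq Asset] (l : List (Entry Agent Asset))
    (e : Entry Agent Asset) : EntryOk (l.filter isToken) e ↔ EntryOk l e := by
  cases e <;> simp [EntryOk, currentOwner_filter]

theorem pay_entries_irrelevant [DecidableEq Asset]
    (bc : List (Entry Agent Asset)) (a : Agent) (α : Asset) :
    (Owns bc a α ↔ Owns (bc.filter isToken) a α) ∧
    (Valid bc ↔ Valid (bc.filter isToken)) := by
  induction bc using List.reverseRecOn with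
  | nil => exact ⟨Iff.rfl, Iff.rfl⟩
  | append_singleton l e ih =>
    obtain ⟨ih1, ih2⟩ := ih
    by_cases he : isToken e = true
    · have hf : (l ++ [e]).filter isToken = l.filter isToken ++ [e] := by
        simp [List.filter_append, he]
      rw [hf, owns_snoc, owns_snoc, valid_snoc, valid_snoc, entryOk_filter, ih1, ih2]
      exact ⟨Iff.rfl, Iff.rfl⟩
    · have hf : (l ++ [e]).filter isToken = l.filter isToken := by
        simp [List.filter_append, he]
      rw [hf, owns_snoc, valid_snoc, ← ih1, ← ih2]
      cases e <;> simp_all [isToken, tokenOwner, EntryOk]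
end

section
/- Correctness of the blockchain implementation of ownership: if the ledger bc is valid, then for every asset α there exists a unique agent a with Owns bc a α if and only if some entry of bc is a mint of α; in particular every minted asset has exactly one owner and every asset never minted in bc has no owner. -/
variable {Agent Asset : Type*}

theorem exists_token_of_foldl [DecidableEq Asset] (α : Asset) (l : List (Entry Agent Asset)) :
    ∀ (acc : Option Agent) (a : Agent),
      l.foldl (fun acc e => match tokenOwner e α with | some a => some a | none => acc) acc = some a →
      acc = some a ∨ ∃ e ∈ l, tokenOwner e α = some a := by
  induction l with
  | nil => intro acc a h; exact Or.inl h
  | cons x t ih =>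
    intro acc a h
    rw [List.foldl_cons] at h
    rcases ih _ _ h with h1 | ⟨e, he, h2⟩
    · cases hx : tokenOwner x α with
      | none => rw [hx] at h1; exact Or.inl h1
      | some b =>
        rw [hx] at h1
        exact Or.inr ⟨x, by simp, hx.trans h1⟩
    · exact Or.inr ⟨e, List.mem_cons_of_mem _ he, h2⟩

theorem mint_of_token [DecidableEq Asset] (bc : List (Entry Agent Asset)) (h : Valid bc)
    (α : Asset) (n : ℕ) : ∀ (hn : n < bc.length) (a : Agent), tokenOwner bc[n] α = some a →
      ∃ a : Agent, Entry.mint a α ∈ bc := by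
  induction n using Nat.strong_induction_on with
  | _ n ih =>
    intro hn a ha
    have hv := h ⟨n, hn⟩
    simp only [List.get_eq_getElem] at hv
    have hm : bc[n] ∈ bc := List.getElem_mem hn
    generalize bc[n] = e at hv ha hm
    cases e with
    | mint b β =>
      by_cases hb : β = α
      · subst hb; exact ⟨b, hm⟩
      · simp [tokenOwner, hb] at ha
    | pay b s c => simp [tokenOwner] at ha
    | transfer o w β =>
      by_cases hb : β = α
      · subst hb
        simp only at hv
        rcases exists_token_of_foldl _ _ _ _ hv with h1 | ⟨e, he, h2⟩
        · cases h1
        · obtain ⟨k, hk, rfl⟩ := List.getElem_of_mem he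
          rw [List.getElem_take] at h2
          rw [List.length_take] at hk
          exact ih k (by omega) (by omega) o h2
      · simp [tokenOwner, hb] at ha

theorem blockchain_correctness [DecidableEq Asset]
    (bc : List (Entry Agent Asset)) (h : Valid bc) (α : Asset) :
    (∃! a : Agent, Owns bc a α) ↔ (∃ a : Agent, Entry.mint a α ∈ bc) := by
  constructor
  · rintro ⟨a, ⟨i, hi, -⟩, -⟩
    exact mint_of_token bc h α i i.2 a hi
  · rintro ⟨a, ha⟩
    obtain ⟨k, hk, hka⟩ := List.getElem_of_mem ha
    classical
    have hne : (Finset.univ.filter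
        (fun i : Fin bc.length => tokenOwner (bc.get i) α ≠ none)).Nonempty :=
      ⟨⟨k, hk⟩, Finset.mem_filter.2 ⟨Finset.mem_univ _, by
        rw [List.get_eq_getElem, hka]; simp [tokenOwner]⟩⟩
    obtain ⟨m, hm, hmax⟩ := Finset.exists_max_image _ (fun i : Fin bc.length => (i : ℕ)) hne
    obtain ⟨b, hb⟩ := Option.ne_none_iff_exists'.1 (Finset.mem_filter.1 hm).2
    have hlast : ∀ j : Fin bc.length, (m : ℕ) < (j : ℕ) → tokenOwner (bc.get j) α = none := by
      intro j hj
      by_contra hc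
      have := hmax j (Finset.mem_filter.2 ⟨Finset.mem_univ _, hc⟩)
      omega
    refine ⟨b, ⟨m, hb, hlast⟩, ?_⟩
    rintro c ⟨i, hi, hil⟩
    rcases lt_trichotomy (i : ℕ) (m : ℕ) with hlt | heq | hgt
    · have := hil m hlt
      rw [hb] at this; cases this
    · have hh : i = m := Fin.ext heq
      subst hh
      rw [hb] at hi
      exact (Option.some.inj hi).symm
    · have := hlast i hgt
      rw [hi] at this; cases this
end
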